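/- For every integer n ≥ 0, D_n(−1) − T_n(−1) = F_{n+2}, where (F_m) is the Fibonacci sequence defined by F_0 = 0, F_1 = 1 and F_m = F_{m−1} + F_{m−2} for m ≥ 2. -/

import Mathlib

/-!
The difference `D_n(-1) - T_n(-1)` is the sum `S_n` of `(-1)^(des_B + neg)` over all signed simsun
permutations, where `neg` is the number of negative entries. A signed permutation of rank `n + 1` is
obtained in a unique way from one of rank `n` by inserting `±N`, `N = n + 1`, somewhere after the
initial `0` (`insertTop_bijective`), and it is simsun iff the smaller one is and the new word has no
double descent (`isSimsun_insertTop`).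

For a fixed word without double descents, the insertions of `N` and `-N` almost cancel: an induction
on the word shows that their signed contributions add up to twice the weight of the word, or once if
the word starts with a descent (`insertSum_value`). The insertions whose result does not start with a
descent contribute exactly the weight of the word (`insertSum_asc_value`). With `P_n` the part of
`S_n` coming from words that do not start with a descent, this says `S_{n+1} = S_n + P_n` and
`P_{n+1} = S_n`, the Fibonacci recursion, with `S_0 = P_0 = 1`.
-/

open Finset

/-- A signed permutation of rank `n`, encoded as an (unsigned) permutation of
`Fin n` together with a choice of sign for each position: the entry
`π(i+1)` of the word is `±(σ(i)+1)` where the sign is `-` iff `sgn i = true`. -/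
abbrev SignedPerm (n : ℕ) := Equiv.Perm (Fin n) × (Fin n → Bool)

/-- The entry `π(j+1)` of the word of a signed permutation. -/
def entry {n : ℕ} (π : SignedPerm n) (j : Fin n) : ℤ :=
  (if π.2 j then -1 else 1) * (((π.1 j : ℕ) : ℤ) + 1)

/-- The word `π(0)π(1)⋯π(n)` of a signed permutation (with the leading `0`). -/
def word {n : ℕ} (π : SignedPerm n) : List ℤ :=
  0 :: List.ofFn (entry π)

/-- `π(i)` for `0 ≤ i ≤ n` (and `0` outside this range). -/
def wordFn {n : ℕ} (π : SignedPerm n) (i : ℕ) : ℤ :=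
  if h : 1 ≤ i ∧ i ≤ n then entry π ⟨i - 1, by omega⟩ else 0

/-- A word has no double descent: no three consecutive strictly decreasing entries. -/
def noDD : List ℤ → Bool
  | a :: b :: c :: rest => (!(decide (b < a) && decide (c < b))) && noDD (b :: c :: rest)
  | _ => true

/-- A signed permutation is simsun if for every `0 ≤ k ≤ n`, deleting the entries
`±n, …, ±(n-k+1)` (i.e. keeping the entries of absolute value `≤ m := n - k`) from the
word `π(0)π(1)⋯π(n)` leaves a word with no three consecutive strictly decreasing
entries. -/
def IsSimsun {n : ℕ} (π : SignedPerm n) : Prop :=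
  ∀ m ≤ n, noDD ((word π).filter (fun a => a.natAbs ≤ m)) = true

instance {n : ℕ} : DecidablePred (IsSimsun (n := n)) := fun _ => by
  unfold IsSimsun; infer_instance

/-- The type-B descent number `des_B(π) = #{0 ≤ i ≤ n-1 : π(i) > π(i+1)}`. -/
def desB {n : ℕ} (π : SignedPerm n) : ℕ :=
  ((Finset.range n).filter (fun i => wordFn π (i + 1) < wordFn π i)).card

/-- The set of signed simsun permutations of rank `n`. -/
def RB (n : ℕ) : Finset (SignedPerm n) := univ.filter IsSimsun

/-- Signed simsun permutations with `π(1) > 0` (for `n = 0`, the empty permutation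
is included, following the convention `R⁺_0 = 1`). -/
def RBp (n : ℕ) : Finset (SignedPerm n) :=
  (RB n).filter (fun π => 0 < wordFn π 1 ∨ n = 0)

/-- Signed simsun permutations with `π(1) < 0`. -/
def RBm (n : ℕ) : Finset (SignedPerm n) :=
  (RB n).filter (fun π => wordFn π 1 < 0)

/-- A signed permutation is even-signed if its word has an even number of negative entries. -/
def IsEvenSigned {n : ℕ} (π : SignedPerm n) : Prop :=
  (univ.filter (fun j => π.2 j = true)).card % 2 = 0

instance {n : ℕ} : DecidablePred (IsEvenSigned (n := n)) := fun _ => by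
  unfold IsEvenSigned; infer_instance

def RD (n : ℕ) : Finset (SignedPerm n) := (RB n).filter IsEvenSigned
def RT (n : ℕ) : Finset (SignedPerm n) := (RB n).filter (fun π => ¬ IsEvenSigned π)
def RDp (n : ℕ) : Finset (SignedPerm n) := (RD n).filter (fun π => 0 < wordFn π 1 ∨ n = 0)
def RDm (n : ℕ) : Finset (SignedPerm n) := (RD n).filter (fun π => wordFn π 1 < 0)
def RTp (n : ℕ) : Finset (SignedPerm n) := (RT n).filter (fun π => 0 < wordFn π 1 ∨ n = 0)
def RTm (n : ℕ) : Finset (SignedPerm n) := (RT n).filter (fun π => wordFn π 1 < 0)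

/-- `R(n,k)`, as an integer, vanishing for `k < 0`. -/
def Rcnt (n : ℕ) (k : ℤ) : ℤ := ((RB n).filter (fun π => (desB π : ℤ) = k)).card
def Rpcnt (n : ℕ) (k : ℤ) : ℤ := ((RBp n).filter (fun π => (desB π : ℤ) = k)).card
def Rmcnt (n : ℕ) (k : ℤ) : ℤ := ((RBm n).filter (fun π => (desB π : ℤ) = k)).card
def Dcnt (n : ℕ) (k : ℤ) : ℤ := ((RD n).filter (fun π => (desB π : ℤ) = k)).card
def Tcnt (n : ℕ) (k : ℤ) : ℤ := ((RT n).filter (fun π => (desB π : ℤ) = k)).card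
def Dpcnt (n : ℕ) (k : ℤ) : ℤ := ((RDp n).filter (fun π => (desB π : ℤ) = k)).card
def Dmcnt (n : ℕ) (k : ℤ) : ℤ := ((RDm n).filter (fun π => (desB π : ℤ) = k)).card
def Tpcnt (n : ℕ) (k : ℤ) : ℤ := ((RTp n).filter (fun π => (desB π : ℤ) = k)).card
def Tmcnt (n : ℕ) (k : ℤ) : ℤ := ((RTm n).filter (fun π => (desB π : ℤ) = k)).card

open Polynomial in
/-- The descent polynomial `R_n(x) = Σ_{π ∈ RB_n} x^{des_B(π)}`. -/
noncomputable def Rpoly (n : ℕ) : ℚ[X] := ∑ π ∈ RB n, X ^ desB π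
open Polynomial in
noncomputable def Rppoly (n : ℕ) : ℚ[X] := ∑ π ∈ RBp n, X ^ desB π
open Polynomial in
noncomputable def Rmpoly (n : ℕ) : ℚ[X] := ∑ π ∈ RBm n, X ^ desB π
open Polynomial in
noncomputable def Dpoly (n : ℕ) : ℚ[X] := ∑ π ∈ RD n, X ^ desB π
open Polynomial in
noncomputable def Tpoly (n : ℕ) : ℚ[X] := ∑ π ∈ RT n, X ^ desB π
open Polynomial in
noncomputable def Dppoly (n : ℕ) : ℚ[X] := ∑ π ∈ RDp n, X ^ desB π
open Polynomial in
noncomputable def Dmpoly (n : ℕ) : ℚ[X] := ∑ π ∈ RDm n, X ^ desB π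
open Polynomial in
noncomputable def Tppoly (n : ℕ) : ℚ[X] := ∑ π ∈ RTp n, X ^ desB π
open Polynomial in
noncomputable def Tmpoly (n : ℕ) : ℚ[X] := ∑ π ∈ RTm n, X ^ desB π

/-! ### Weights of words under insertion of `±N` -/

/-- `(-1)^d` for a word with `d` descents and no double descent, and `0` for a word with a double
descent. -/
def descWeight : List ℤ → ℚ
  | a :: b :: c :: t =>
      if b < a ∧ c < b then 0 else (if b < a then -1 else 1) * descWeight (b :: c :: t)
  | [a, b] => if b < a then -1 else 1
  | _ => 1

/-- The word starts with a descent. -/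
def HeadDesc : List ℤ → Prop
  | a :: b :: _ => b < a
  | _ => False

instance : DecidablePred HeadDesc
  | [] => isFalse id
  | [_] => isFalse id
  | a :: b :: _ => inferInstanceAs (Decidable (b < a))

/-- Signed total weight of the words obtained from `a :: t` by inserting `N` or `-N` somewhere
strictly after the first entry of `t`; the insertion of `-N` counts negatively. -/
def lateSum (N a : ℤ) : List ℤ → ℚ
  | [] => 0
  | b :: t => ∑ p ∈ range (t.length + 1),
      (descWeight (a :: b :: t.insertIdx p N) - descWeight (a :: b :: t.insertIdx p (-N)))

lemma descWeight_asc {a b : ℤ} (h : ¬ b < a) (t : List ℤ) :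
    descWeight (a :: b :: t) = descWeight (b :: t) := by
  cases t <;> simp [descWeight, h]

lemma descWeight_desc {a b : ℤ} (h : b < a) (t : List ℤ) :
    descWeight (a :: b :: t) = if HeadDesc (b :: t) then 0 else - descWeight (b :: t) := by
  cases t with
  | nil => simp [descWeight, h, HeadDesc]
  | cons c t => by_cases hc : c < b <;> simp [descWeight, h, HeadDesc, hc]

lemma insertSum_eq (N a : ℤ) (t : List ℤ) :
    ∑ p ∈ range (t.length + 1),
      (descWeight (a :: t.insertIdx p N) - descWeight (a :: t.insertIdx p (-N))) =
    descWeight (a :: N :: t) - descWeight (a :: -N :: t) + lateSum N a t := by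
  cases t with
  | nil => simp [lateSum]
  | cons b t =>
    rw [List.length_cons, Finset.sum_range_succ']
    simp [lateSum, add_comm]

lemma noDD_tail {a : ℤ} {t : List ℤ} (h : noDD (a :: t) = true) : noDD t = true := by
  match t with
  | [] => rfl
  | [_] => rfl
  | b :: c :: t => simp only [noDD, Bool.and_eq_true] at h; exact h.2

lemma noDD_not_headDesc {a b : ℤ} {t : List ℤ} (h : noDD (a :: b :: t) = true) (hab : b < a) :
    ¬ HeadDesc (b :: t) := by
  match t with
  | [] => exact id
  | c :: t => simp [noDD, hab] at h; simpa [HeadDesc] using h.1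

lemma lateSum_asc {N a b : ℤ} (h : ¬ b < a) (t : List ℤ) :
    lateSum N a (b :: t) =
      descWeight (b :: N :: t) - descWeight (b :: -N :: t) + lateSum N b t := by
  rw [← insertSum_eq]
  simp only [lateSum, descWeight_asc h]

/-- Below a descent `a > b`, the insertion of `-N` right after `b` creates a double descent and
drops out; all the other insertions into `b :: t` survive with the opposite sign. -/
lemma lateSum_desc {N a b : ℤ} (hab : b < a) {t : List ℤ} (ht : ¬ HeadDesc (b :: t))
    (h1 : -N < b) (h2 : b < N) :
    lateSum N a (b :: t) = - descWeight (b :: N :: t) - lateSum N b t := by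
  cases t with
  | nil => simp [lateSum, descWeight, hab, h1, h2.not_gt]
  | cons c t =>
    have hc : ¬ c < b := ht
    simp only [lateSum]
    rw [List.length_cons, Finset.sum_range_succ']
    simp [descWeight_desc hab, HeadDesc, hc, h1, h2.not_gt, Finset.sum_sub_distrib,
      Finset.sum_add_distrib]
    ring

/-- The left-hand side is the signed total weight of all insertions of `±N` after the head. It is
twice the weight of the word, or equal to it if the word starts with a descent. -/
lemma insertSum_value {N a : ℤ} {t : List ℤ} (hdd : noDD (a :: t) = true)
    (hN : ∀ x ∈ a :: t, -N < x ∧ x < N) :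
    descWeight (a :: N :: t) - descWeight (a :: -N :: t) + lateSum N a t =
      (if HeadDesc (a :: t) then 1 else 2) * descWeight (a :: t) := by
  induction t generalizing a with
  | nil =>
    have := hN a (by simp)
    simp [lateSum, descWeight, HeadDesc, this.1, this.2.not_gt]; norm_num
  | cons b t ih =>
    have ha := hN a (by simp)
    have hb := hN b (by simp)
    have ih' := ih (noDD_tail hdd) (fun x hx => hN x (by simp at hx ⊢; tauto))
    rw [descWeight_asc ha.2.not_gt, descWeight_desc hb.2, descWeight_desc ha.1,
      descWeight_asc hb.1.not_gt]
    have hn : ¬ HeadDesc (-N :: b :: t) := hb.1.not_gt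
    rw [if_neg hn]
    by_cases hab : b < a
    · have ht := noDD_not_headDesc hdd hab
      have hh : HeadDesc (a :: b :: t) := hab
      have h3 : descWeight (b :: -N :: t) = - descWeight (b :: t) := by
        rw [descWeight_desc hb.1]
        cases t with
        | nil => simp [descWeight, HeadDesc]
        | cons c t =>
          have hc := (hN c (by simp)).1.not_gt
          simp [descWeight_asc, HeadDesc, hc, descWeight_asc (show ¬ c < b from ht)]
      rw [lateSum_desc hab ht hb.1 hb.2, if_pos hh, descWeight_desc hab, if_neg ht]
      rw [if_neg ht, h3] at ih'
      linarith
    · have hh : ¬ HeadDesc (a :: b :: t) := hab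
      rw [lateSum_asc hab, if_neg hh, descWeight_asc hab, ih']
      split_ifs <;> ring

/-- Among the insertions of `±N` after the head (with `-N` counted negatively), those whose
result does not start with a descent have total weight equal to the weight of the original word. -/
lemma insertSum_asc_value {N a : ℤ} {t : List ℤ} (hdd : noDD (a :: t) = true)
    (hN : ∀ x ∈ a :: t, -N < x ∧ x < N) :
    ∑ p ∈ range (t.length + 1),
      ((if HeadDesc (a :: t.insertIdx p N) then 0 else descWeight (a :: t.insertIdx p N)) -
        (if HeadDesc (a :: t.insertIdx p (-N)) then 0 else descWeight (a :: t.insertIdx p (-N)))) =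
      descWeight (a :: t) := by
  have hv := insertSum_value hdd hN
  have ha := hN a (by simp)
  cases t with
  | nil => simp [HeadDesc, descWeight, ha.1, ha.2.not_gt]
  | cons b t =>
    have hb := hN b (by simp)
    rw [List.length_cons, Finset.sum_range_succ']
    by_cases hab : b < a
    · have ht := noDD_not_headDesc hdd hab
      simp [HeadDesc, hab, ha.1, ha.2.not_gt, descWeight_asc, descWeight_desc hab,
        descWeight_desc hb.2]
    · have h3 : descWeight (a :: -N :: b :: t) = - descWeight (a :: b :: t) := by
        rw [descWeight_desc ha.1, descWeight_asc hb.1.not_gt, descWeight_asc hab]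
        simp [HeadDesc, hb.1.not_gt]
      have hh : ¬ HeadDesc (a :: b :: t) := hab
      rw [if_neg hh, h3] at hv
      simp only [lateSum] at hv
      simp [HeadDesc, hab, ha.1, ha.2.not_gt] at hv ⊢
      linarith

/-! ### Inserting the largest entry into a signed permutation -/

lemma ofFn_eq_insertIdx {α : Type*} {n : ℕ} (g : Fin (n + 1) → α) (f : Fin n → α)
    (p : Fin (n + 1)) (x : α) (hp : g p = x) (hs : ∀ i, g (p.succAbove i) = f i) :
    List.ofFn g = (List.ofFn f).insertIdx p x := by
  have hpn : (p : ℕ) ≤ n := by omega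
  apply List.ext_getElem
  · simp [List.length_insertIdx, hpn]
  · intro j h1 h2
    have hj : j < n + 1 := by simpa using h1
    rw [List.getElem_ofFn, List.getElem_insertIdx]
    split_ifs with h3 h4
    · rw [List.getElem_ofFn, ← hs, Fin.succAbove_of_castSucc_lt]
      · rfl
      · exact h3
    · subst h4; exact hp
    · rw [List.getElem_ofFn, ← hs, Fin.succAbove_of_le_castSucc]
      · congr 1; ext; simp; omega
      · rw [Fin.le_def]; simp; omega

/-- The signed permutation of rank `n + 1` whose word is that of `π` with the entry `±(n + 1)`
inserted right after `π(p)`. -/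
def insertTop {n : ℕ} (x : SignedPerm n × Fin (n + 1) × Bool) : SignedPerm (n + 1) :=
  (((finSuccEquiv' x.2.1).trans (Equiv.optionCongr x.1.1)).trans (finSuccEquiv' (Fin.last n)).symm,
    x.2.1.insertNth x.2.2 x.1.2)

section insertTop

variable {n : ℕ} (π : SignedPerm n) (p : Fin (n + 1)) (s : Bool)

lemma insertTop_perm_self : (insertTop (π, p, s)).1 p = Fin.last n := by
  simp [insertTop]

lemma insertTop_perm_succAbove (i : Fin n) :
    (insertTop (π, p, s)).1 (p.succAbove i) = (π.1 i).castSucc := by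
  simp [insertTop]

lemma insertTop_sign_self : (insertTop (π, p, s)).2 p = s := by
  simp [insertTop]

lemma insertTop_sign_succAbove (i : Fin n) :
    (insertTop (π, p, s)).2 (p.succAbove i) = π.2 i := by
  simp [insertTop]

lemma word_insertTop :
    word (insertTop (π, p, s)) =
      0 :: (List.ofFn (entry π)).insertIdx p ((if s then -1 else 1) * ((n : ℤ) + 1)) := by
  unfold word
  rw [ofFn_eq_insertIdx (entry (insertTop (π, p, s))) (entry π) p]
  · simp [entry, insertTop_perm_self, insertTop_sign_self]
  · intro i
    simp [entry, insertTop_perm_succAbove, insertTop_sign_succAbove]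

end insertTop

lemma insertTop_bijective (n : ℕ) : Function.Bijective (insertTop (n := n)) := by
  rw [Fintype.bijective_iff_injective_and_card]
  constructor
  · rintro ⟨π, p, s⟩ ⟨π', p', s'⟩ h
    have hp : p = p' := by
      apply (insertTop (π, p, s)).1.injective
      rw [insertTop_perm_self, h, insertTop_perm_self]
    subst hp
    have hs : s = s' := by
      rw [← insertTop_sign_self π p s, h, insertTop_sign_self]
    have h1 : π.1 = π'.1 := by
      ext i
      rw [← Fin.val_castSucc, ← insertTop_perm_succAbove π p s, h, insertTop_perm_succAbove]
      rfl
    have h2 : π.2 = π'.2 := by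
      ext i
      rw [← insertTop_sign_succAbove π p s, h, insertTop_sign_succAbove]
    rw [hs, Prod.ext h1 h2]
  · simp [Fintype.card_perm, Nat.factorial_succ, pow_succ]
    ring

lemma sum_signedPerm_succ (n : ℕ) (g : SignedPerm (n + 1) → ℚ) :
    ∑ π, g π = ∑ π : SignedPerm n, ∑ p : Fin (n + 1),
      (g (insertTop (π, p, false)) + g (insertTop (π, p, true))) := by
  rw [← (insertTop_bijective n).sum_comp, Fintype.sum_prod_type]
  refine Finset.sum_congr rfl fun π _ => ?_
  rw [Fintype.sum_prod_type]
  refine Finset.sum_congr rfl fun p _ => ?_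
  rw [Fintype.sum_bool, add_comm]

lemma word_bound {n : ℕ} (π : SignedPerm n) :
    ∀ x ∈ word π, -((n : ℤ) + 1) < x ∧ x < (n : ℤ) + 1 := by
  intro x hx
  simp only [word, List.mem_cons, List.mem_ofFn] at hx
  rcases hx with rfl | ⟨j, rfl⟩
  · constructor <;> linarith [Int.natCast_nonneg n]
  · have := (π.1 j).isLt
    unfold entry
    split_ifs <;> constructor <;> omega

lemma word_filter_self {n : ℕ} (π : SignedPerm n) :
    (word π).filter (fun a => a.natAbs ≤ n) = word π := by
  rw [List.filter_eq_self]
  intro x hx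
  have := word_bound π x hx
  simp; omega

lemma filter_insertIdx {α : Type*} (q : α → Bool) (x : α) (hx : q x = false) (l : List α) (p : ℕ) :
    (l.insertIdx p x).filter q = l.filter q := by
  induction l generalizing p with
  | nil => cases p <;> simp [hx]
  | cons a l ih => cases p <;> simp [hx, List.filter_cons, ih]

/-- The simsun condition for rank `n + 1` splits off the condition on the full word. -/
lemma isSimsun_insertTop {n : ℕ} (π : SignedPerm n) (p : Fin (n + 1)) (s : Bool) :
    IsSimsun (insertTop (π, p, s)) ↔
      IsSimsun π ∧ noDD (word (insertTop (π, p, s))) = true := by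
  have key : ∀ m ≤ n, (word (insertTop (π, p, s))).filter (fun a => a.natAbs ≤ m) =
      (word π).filter (fun a => a.natAbs ≤ m) := by
    intro m hm
    rw [word_insertTop, word, List.filter_cons, List.filter_cons, filter_insertIdx]
    cases s <;> simp <;> omega
  constructor
  · intro h
    refine ⟨fun m hm => ?_, ?_⟩
    · rw [← key m hm]; exact h m (by omega)
    · have := h (n + 1) le_rfl
      rwa [word_filter_self] at this
  · rintro ⟨h1, h2⟩ m hm
    rcases Nat.lt_or_eq_of_le hm with h | h
    · rw [key m (by omega)]; exact h1 m (by omega)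
    · subst h; rwa [word_filter_self]

/-! ### The signed weight and its recursion -/

/-- The sign `(-1)^k`, with `k` the number of negative entries. -/
def negSign {n : ℕ} (π : SignedPerm n) : ℚ := ∏ j, if π.2 j = true then -1 else 1

lemma negSign_insertTop {n : ℕ} (π : SignedPerm n) (p : Fin (n + 1)) (s : Bool) :
    negSign (insertTop (π, p, s)) = (if s = true then -1 else 1) * negSign π := by
  unfold negSign
  rw [Fin.prod_univ_succAbove _ p]
  simp only [insertTop_sign_self, insertTop_sign_succAbove]

lemma descWeight_of_not_noDD {l : List ℤ} (h : ¬ noDD l = true) : descWeight l = 0 := by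
  induction l with
  | nil => simp [noDD] at h
  | cons a t ih =>
    match t with
    | [] => simp [noDD] at h
    | [_] => simp [noDD] at h
    | b :: c :: t =>
      by_cases hd : b < a ∧ c < b
      · simp [descWeight, hd]
      · rw [descWeight, if_neg hd, ih, mul_zero]
        intro h'
        apply h
        rw [noDD, h', Bool.and_true, ← Bool.decide_and, decide_eq_false hd]
        rfl

lemma descWeight_eq_prod {l : List ℤ} (h : noDD l = true) :
    descWeight l = ∏ i ∈ range (l.length - 1),
      if l.getD (i + 1) 0 < l.getD i 0 then -1 else 1 := by
  induction l with
  | nil => simp [descWeight]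
  | cons a t ih =>
    cases t with
    | nil => simp [descWeight]
    | cons b t =>
      have ih' := ih (noDD_tail h)
      simp only [List.length_cons, Nat.add_sub_cancel] at ih' ⊢
      rw [Finset.prod_range_succ']
      have e : descWeight (a :: b :: t) = (if b < a then -1 else 1) * descWeight (b :: t) := by
        by_cases hab : b < a
        · rw [descWeight_desc hab, if_neg (noDD_not_headDesc h hab)]; simp [hab]
        · rw [descWeight_asc hab]; simp [hab]
      rw [e, ih', mul_comm]
      simp

lemma wordFn_eq_getD {n : ℕ} (π : SignedPerm n) (i : ℕ) : wordFn π i = (word π).getD i 0 := by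
  unfold wordFn word
  cases i with
  | zero => simp
  | succ i =>
    by_cases h : i < n
    · have : i + 1 ≤ n := h
      simp [List.getD, this]
    · have : ¬ i + 1 ≤ n := h
      simp [List.getD, this]

lemma descWeight_word {n : ℕ} {π : SignedPerm n} (h : noDD (word π) = true) :
    descWeight (word π) = (-1) ^ desB π := by
  rw [descWeight_eq_prod h, desB, Finset.prod_ite]
  simp only [← wordFn_eq_getD]
  simp [word]

/-- The signed weight of a signed permutation: `(-1)^(des_B + number of negative entries)` if it is
simsun, and `0` otherwise. -/
def weight {n : ℕ} (π : SignedPerm n) : ℚ :=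
  if IsSimsun π then descWeight (word π) * negSign π else 0

lemma IsSimsun.noDD_word {n : ℕ} {π : SignedPerm n} (h : IsSimsun π) : noDD (word π) = true := by
  have := h n le_rfl
  rwa [word_filter_self] at this

lemma weight_insertTop {n : ℕ} {π : SignedPerm n} (h : IsSimsun π) (p : Fin (n + 1)) (s : Bool) :
    weight (insertTop (π, p, s)) =
      descWeight (word (insertTop (π, p, s))) * ((if s = true then -1 else 1) * negSign π) := by
  unfold weight
  rw [negSign_insertTop]
  by_cases hd : noDD (word (insertTop (π, p, s))) = true
  · rw [if_pos ((isSimsun_insertTop π p s).mpr ⟨h, hd⟩)]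
  · rw [if_neg (fun h' => hd ((isSimsun_insertTop π p s).mp h').2), descWeight_of_not_noDD hd,
      zero_mul]

lemma weight_insertTop_false {n : ℕ} {π : SignedPerm n} (h : IsSimsun π) (p : Fin (n + 1)) :
    weight (insertTop (π, p, false)) =
      descWeight (0 :: (List.ofFn (entry π)).insertIdx p ((n : ℤ) + 1)) * negSign π := by
  rw [weight_insertTop h, word_insertTop]
  simp

lemma weight_insertTop_true {n : ℕ} {π : SignedPerm n} (h : IsSimsun π) (p : Fin (n + 1)) :
    weight (insertTop (π, p, true)) =
      -(descWeight (0 :: (List.ofFn (entry π)).insertIdx p (-((n : ℤ) + 1))) * negSign π) := by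
  rw [weight_insertTop h, word_insertTop]
  simp

lemma weight_insertTop_of_not {n : ℕ} {π : SignedPerm n} (h : ¬ IsSimsun π) (p : Fin (n + 1))
    (s : Bool) : weight (insertTop (π, p, s)) = 0 := by
  rw [weight, if_neg (fun hs => h ((isSimsun_insertTop π p s).mp hs).1)]

/-- `D_n(-1) - T_n(-1)` as a weighted sum over all signed permutations. -/
def total (n : ℕ) : ℚ := ∑ π : SignedPerm n, weight π

/-- The part of `total n` coming from words that do not start with a descent, that is, with
`π(1) > 0` or `n = 0`. -/
def totalAsc (n : ℕ) : ℚ := ∑ π : SignedPerm n, if HeadDesc (word π) then 0 else weight π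

lemma total_succ (n : ℕ) : total (n + 1) = total n + totalAsc n := by
  unfold total totalAsc
  rw [sum_signedPerm_succ, ← Finset.sum_add_distrib]
  refine Finset.sum_congr rfl fun π _ => ?_
  by_cases h : IsSimsun π
  · have hv := insertSum_value h.noDD_word (word_bound π)
    rw [← insertSum_eq, List.length_ofFn, Finset.sum_range] at hv
    simp only [weight_insertTop_false h, weight_insertTop_true h, ← sub_eq_add_neg, ← sub_mul]
    rw [← Finset.sum_mul]
    rw [hv, ← word]
    simp only [weight, if_pos h]
    split_ifs <;> ring
  · simp [weight_insertTop_of_not h, show weight π = 0 from if_neg h]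

lemma totalAsc_succ (n : ℕ) : totalAsc (n + 1) = total n := by
  unfold total totalAsc
  rw [sum_signedPerm_succ]
  refine Finset.sum_congr rfl fun π _ => ?_
  by_cases h : IsSimsun π
  · have hv := insertSum_asc_value h.noDD_word (word_bound π)
    rw [List.length_ofFn, Finset.sum_range] at hv
    simp only [weight_insertTop_false h, weight_insertTop_true h]
    have e : ∀ (P Q : Prop) [Decidable P] [Decidable Q] (x y : ℚ),
        (if P then 0 else x * negSign π) + (if Q then 0 else -(y * negSign π)) =
          ((if P then 0 else x) - (if Q then 0 else y)) * negSign π := by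
      intro P Q _ _ x y; split_ifs <;> ring
    simp only [e]
    rw [← Finset.sum_mul]
    simp only [word_insertTop, Bool.false_eq_true, if_false, if_true, one_mul, neg_one_mul]
    rw [hv, ← word]
    simp only [weight, if_pos h]
  · simp [weight_insertTop_of_not h, show weight π = 0 from if_neg h]

lemma total_zero : total 0 = 1 := by
  have h : ∀ π : SignedPerm 0, IsSimsun π := fun π m hm => by
    simp [word, noDD]
  simp [total, weight, h, negSign, word, descWeight]

lemma totalAsc_zero : totalAsc 0 = 1 := by
  rw [← total_zero]
  simp [totalAsc, total, HeadDesc, word]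

lemma negSign_eq {n : ℕ} (π : SignedPerm n) :
    negSign π = if IsEvenSigned π then 1 else -1 := by
  have e : negSign π = (-1) ^ (univ.filter (fun j => π.2 j = true)).card := by
    rw [negSign, Finset.prod_ite]; simp
  rw [e]
  by_cases h : IsEvenSigned π
  · rw [if_pos h, Even.neg_one_pow (Nat.even_iff.mpr h)]
  · rw [if_neg h, Odd.neg_one_pow (Nat.odd_iff.mpr (Nat.mod_two_ne_zero.mp h))]

lemma eval_sub_eq_total (n : ℕ) :
    Polynomial.eval (-1 : ℚ) (Dpoly n) - Polynomial.eval (-1 : ℚ) (Tpoly n) = total n := by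
  unfold Dpoly Tpoly total RD RT RB
  simp only [Polynomial.eval_finsetSum, Finset.sum_filter]
  rw [← Finset.sum_sub_distrib]
  refine Finset.sum_congr rfl fun π _ => ?_
  by_cases h : IsSimsun π
  · rw [weight, if_pos h, if_pos h, if_pos h, descWeight_word h.noDD_word, negSign_eq]
    split_ifs <;> simp
  · simp [weight, h]

/-- `D_n(−1) − T_n(−1) = F_{n+2}`, where `F` is the Fibonacci sequence. -/
theorem stmt18 (F : ℕ → ℚ) (hF0 : F 0 = 0) (hF1 : F 1 = 1)
    (hF : ∀ m : ℕ, F (m + 2) = F (m + 1) + F m) (n : ℕ) :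
    Polynomial.eval (-1 : ℚ) (Dpoly n) - Polynomial.eval (-1 : ℚ) (Tpoly n) = F (n + 2) := by
  have key : ∀ n, total n = F (n + 2) ∧ totalAsc n = F (n + 1) := by
    intro n
    induction n with
    | zero => exact ⟨by rw [total_zero, hF, hF0, hF1, add_zero], by rw [totalAsc_zero, hF1]⟩
    | succ n ih =>
      exact ⟨by rw [total_succ, ih.1, ih.2, hF (n + 1)], by rw [totalAsc_succ, ih.1]⟩
  rw [eval_sub_eq_total, (key n).1]
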